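/- Let D be a cone metric on X, d the induced real-valued function, T : X → X a map, a₁,a₂,a₃,a₄ ≥ 0 with a₁ + a₂ + a₃ + 2a₄ < 1, and x,y ∈ X. If D(Tx,Ty) ≤ a₁·D(x,y) + a₂·D(x,Tx) + a₃·D(y,Ty) + a₄·(D(x,Ty) + D(y,Tx)), then d(Tx,Ty) ≤ a₁·d(x,y) + a₂·d(x,Tx) + a₃·d(y,Ty) + a₄·(d(x,Ty) + d(y,Tx)). -/

import Mathlib

/-! The relation `coneLe P` is compatible with addition and with nonnegative scalars. If `uᵢ`
dominates the `i`-th distance on the right and has norm within `ε` of the infimum defining the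
corresponding `inducedDist`, then the same nonnegative combination of the `uᵢ` dominates
`D (T x) (T y)`. Its norm exceeds the right-hand side by at most `(a₁ + a₂ + a₃ + 2 a₄) ε ≤ ε`,
and `ε` is arbitrary. -/

open Filter Topology

/-- A cone in a real Banach space `E`. -/
structure IsCone (E : Type*) [NormedAddCommGroup E] [NormedSpace ℝ E] (P : Set E) : Prop where
  closed : IsClosed P
  nonempty : P.Nonempty
  ne_singleton_zero : P ≠ {0}
  combo_mem : ∀ a b : ℝ, 0 ≤ a → 0 ≤ b → ∀ x y : E, x ∈ P → y ∈ P → a • x + b • y ∈ P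
  eq_zero_of_mem_of_neg_mem : ∀ x : E, x ∈ P → -x ∈ P → x = 0

/-- `x ≤ y` with respect to the cone `P`, i.e. `y - x ∈ P`. -/
def coneLe {E : Type*} [NormedAddCommGroup E] (P : Set E) (x y : E) : Prop :=
  y - x ∈ P

/-- `x ≪ y` with respect to the cone `P`, i.e. `y - x ∈ interior P`. -/
def coneLt {E : Type*} [NormedAddCommGroup E] (P : Set E) (x y : E) : Prop :=
  y - x ∈ interior P

/-- `D : X × X → E` is a cone metric with respect to the cone `P`. -/
structure IsConeMetric {E : Type*} [NormedAddCommGroup E] (P : Set E)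
    {X : Type*} (D : X → X → E) : Prop where
  nonneg : ∀ x y : X, coneLe P 0 (D x y)
  eq_zero_iff : ∀ x y : X, (D x y = 0 ↔ x = y)
  symm : ∀ x y : X, D x y = D y x
  triangle : ∀ x y z : X, coneLe P (D x y) (D x z + D z y)

/-- The induced real-valued function `d(x,y) = inf {‖u‖ : D x y ≤ u}`. -/
noncomputable def inducedDist {E : Type*} [NormedAddCommGroup E] (P : Set E)
    {X : Type*} (D : X → X → E) (x y : X) : ℝ :=
  sInf {r : ℝ | ∃ u : E, r = ‖u‖ ∧ coneLe P (D x y) u}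

lemma inducedDist_le_norm {E X : Type*} [NormedAddCommGroup E] {P : Set E} {D : X → X → E}
    {x y : X} {u : E} (hu : coneLe P (D x y) u) : inducedDist P D x y ≤ ‖u‖ := by
  refine csInf_le ⟨0, ?_⟩ ⟨u, rfl, hu⟩
  rintro r ⟨v, rfl, -⟩
  exact norm_nonneg v

lemma IsCone.zero_mem {E : Type*} [NormedAddCommGroup E] [NormedSpace ℝ E] {P : Set E}
    (hP : IsCone E P) : (0 : E) ∈ P := by
  obtain ⟨p, hp⟩ := hP.nonempty
  simpa using hP.combo_mem 0 0 le_rfl le_rfl p p hp hp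

/-- Near-minimizers exist: the set in the infimum is nonempty, since it contains `‖D x y‖`. -/
lemma exists_norm_lt_inducedDist_add {E X : Type*} [NormedAddCommGroup E] [NormedSpace ℝ E]
    {P : Set E} (hP : IsCone E P) (D : X → X → E) (x y : X) {ε : ℝ} (hε : 0 < ε) :
    ∃ u : E, coneLe P (D x y) u ∧ ‖u‖ < inducedDist P D x y + ε := by
  have hne : {r : ℝ | ∃ u : E, r = ‖u‖ ∧ coneLe P (D x y) u}.Nonempty :=
    ⟨‖D x y‖, D x y, rfl, by simpa [coneLe] using hP.zero_mem⟩
  obtain ⟨r, ⟨u, rfl, hu⟩, hlt⟩ := exists_lt_of_csInf_lt hne (lt_add_of_pos_right _ hε)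
  exact ⟨u, hu, hlt⟩

theorem stmt18 {E X : Type*} [NormedAddCommGroup E] [NormedSpace ℝ E] [CompleteSpace E]
    [Nonempty X] (P : Set E) (hP : IsCone E P) (hPint : (interior P).Nonempty)
    (D : X → X → E) (hD : IsConeMetric P D) (T : X → X) (a₁ a₂ a₃ a₄ : ℝ)
    (h1 : 0 ≤ a₁) (h2 : 0 ≤ a₂) (h3 : 0 ≤ a₃) (h4 : 0 ≤ a₄)
    (hsum : a₁ + a₂ + a₃ + 2 * a₄ < 1) (x y : X)
    (h : coneLe P (D (T x) (T y))
      (a₁ • D x y + a₂ • D x (T x) + a₃ • D y (T y) + a₄ • (D x (T y) + D y (T x)))) :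
    inducedDist P D (T x) (T y) ≤
      a₁ * inducedDist P D x y + a₂ * inducedDist P D x (T x) +
        a₃ * inducedDist P D y (T y) +
        a₄ * (inducedDist P D x (T y) + inducedDist P D y (T x)) := by
  refine le_of_forall_pos_le_add fun ε hε => ?_
  obtain ⟨u₁, hu₁, n₁⟩ := exists_norm_lt_inducedDist_add hP D x y hε
  obtain ⟨u₂, hu₂, n₂⟩ := exists_norm_lt_inducedDist_add hP D x (T x) hε
  obtain ⟨u₃, hu₃, n₃⟩ := exists_norm_lt_inducedDist_add hP D y (T y) hε
  obtain ⟨u₄, hu₄, n₄⟩ := exists_norm_lt_inducedDist_add hP D x (T y) hε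
  obtain ⟨u₅, hu₅, n₅⟩ := exists_norm_lt_inducedDist_add hP D y (T x) hε
  have hle : coneLe P (D (T x) (T y)) (a₁ • u₁ + a₂ • u₂ + a₃ • u₃ + a₄ • (u₄ + u₅)) := by
    unfold coneLe at *
    have k₁ := hP.combo_mem a₁ a₂ h1 h2 _ _ hu₁ hu₂
    have k₂ := hP.combo_mem 1 a₃ zero_le_one h3 _ _ k₁ hu₃
    have k₃ := hP.combo_mem a₄ a₄ h4 h4 _ _ hu₄ hu₅
    have k₄ := hP.combo_mem 1 1 zero_le_one zero_le_one _ _ k₂ k₃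
    have k₅ := hP.combo_mem 1 1 zero_le_one zero_le_one _ _ k₄ h
    convert k₅ using 1
    module
  have hnorm : ‖a₁ • u₁ + a₂ • u₂ + a₃ • u₃ + a₄ • (u₄ + u₅)‖ ≤
      a₁ * ‖u₁‖ + a₂ * ‖u₂‖ + a₃ * ‖u₃‖ + a₄ * (‖u₄‖ + ‖u₅‖) := by
    refine norm_add₄_le.trans ?_
    rw [norm_smul_of_nonneg h1, norm_smul_of_nonneg h2, norm_smul_of_nonneg h3,
      norm_smul_of_nonneg h4]
    gcongr
    exact norm_add_le _ _
  have e₁ := mul_le_mul_of_nonneg_left n₁.le h1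
  have e₂ := mul_le_mul_of_nonneg_left n₂.le h2
  have e₃ := mul_le_mul_of_nonneg_left n₃.le h3
  have e₄ := mul_le_mul_of_nonneg_left (add_le_add n₄.le n₅.le) h4
  have e₅ := mul_le_mul_of_nonneg_right hsum.le hε.le
  linarith [inducedDist_le_norm hle]
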